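/- Let n ≥ 3 be odd and set σ = (n−1)(n−3)/2 (this is c_{n−1} − (n−1)/2). Then for every i ∈ [n], as elements of k[x]/J_n, x_{nn}^{σ+1} · p^+_{n,i} = x_{in} · p_n; that is, x_{nn}^{σ+1} · p^+_{n,i} − x_{in} · p_n ∈ J_n. -/

import Mathlib

open scoped BigOperators

namespace Veronese

open MvPolynomial

/-- `c m = C(m,2)`. -/
def c (m : ℕ) : ℕ := m.choose 2

variable (n : ℕ)

/-- multiplicity (as ℤ) of the index `i` in the unordered pair `s`. -/
def wt (s : Sym2 (Fin n)) : Fin n → ℤ :=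
  Sym2.lift ⟨fun a b i => (if i = a then 1 else 0) + (if i = b then 1 else 0),
    fun a b => funext fun i => add_comm _ _⟩ s

/-- The Veronese grading map `V_n : ℤ^P → ℤ^n`, sending `e_{ij} ↦ e_i + e_j`. -/
def Vmap : (Sym2 (Fin n) → ℤ) →ₗ[ℤ] (Fin n → ℤ) where
  toFun u := fun i => ∑ s : Sym2 (Fin n), u s * wt n s i
  map_add' u v := funext fun i => by
    simp [add_mul, Finset.sum_add_distrib]
  map_smul' m u := funext fun i => by
    simp [Finset.mul_sum, smul_eq_mul, mul_assoc]

/-- The Veronese lattice `L_n = ker V_n`. -/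
def Llat : Submodule ℤ (Sym2 (Fin n) → ℤ) := LinearMap.ker (Vmap n)

/-- standard basis vector `e_{ij}` of `ℤ^P`. -/
def e (i j : Fin n) : Sym2 (Fin n) → ℤ := Pi.single s(i, j) 1

lemma e_comm (i j : Fin n) : e n i j = e n j i := by
  unfold e; rw [Sym2.eq_swap]

/-- `[ij|ij] = e_{ii} + e_{jj} - 2 e_{ij}`. -/
def minorVec (i j : Fin n) : Sym2 (Fin n) → ℤ := e n i i + e n j j - 2 • e n i j

/-- The principal minor lattice `L'_n`. -/
def L'lat : Submodule ℤ (Sym2 (Fin n) → ℤ) :=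
  Submodule.span ℤ {v | ∃ i j : Fin n, i < j ∧ v = minorVec n i j}

/-- the last index `n` (zero-based: `n-1`) of `Fin n`. -/
def lastIdx (hn : 0 < n) : Fin n := ⟨n - 1, Nat.sub_lt hn one_pos⟩

/-- embedding `[n-1] → [n]`. -/
def ι : Fin (n - 1) → Fin n := Fin.castLE (Nat.sub_le n 1)

/-- `[in|jn] = e_{ij} + e_{nn} - e_{in} - e_{jn}` for `i,j ∈ [n-1]`. -/
def Bvec (hn : 0 < n) : Sym2 (Fin (n - 1)) → (Sym2 (Fin n) → ℤ) :=
  Sym2.lift ⟨fun i j =>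
      e n (ι n i) (ι n j) + e n (lastIdx n hn) (lastIdx n hn)
        - e n (ι n i) (lastIdx n hn) - e n (ι n j) (lastIdx n hn),
    fun i j => by dsimp only; rw [e_comm n (ι n i) (ι n j)]; ring⟩

/-- The family `B'`: `[in|in]` on the diagonal, `2[in|jn]` off it. -/
noncomputable def B'vec (hn : 0 < n) (s : Sym2 (Fin (n - 1))) : Sym2 (Fin n) → ℤ :=
  if s.IsDiag then Bvec n hn s else 2 • Bvec n hn s

/-- multiplicity (as ℕ) of the index `i` in the unordered pair `s`. -/
def wtN (s : Sym2 (Fin n)) : Fin n → ℕ :=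
  Sym2.lift ⟨fun a b i => (if i = a then 1 else 0) + (if i = b then 1 else 0),
    fun a b => funext fun i => add_comm _ _⟩ s

/-- The Veronese degree of an exponent vector `u ∈ ℕ^P`. -/
def VN (u : Sym2 (Fin n) →₀ ℕ) : Fin n → ℕ := fun i => ∑ s : Sym2 (Fin n), u s * wtN n s i

/-- The fiber `V_n^{-1}[b] = {u ∈ ℕ^P : V_n u = b}`. -/
def fiber (b : Fin n → ℕ) : Set (Sym2 (Fin n) →₀ ℕ) := {u | VN n u = b}

/-- natural inclusion `ℕ^P → ℤ^P`. -/
def toZ (u : Sym2 (Fin n) →₀ ℕ) : Sym2 (Fin n) → ℤ := fun s => (u s : ℤ)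

lemma fiber_finite (b : Fin n → ℕ) : (fiber n b).Finite := by
  classical
  have hsub : fiber n b ⊆
      ↑(Finset.Iic ((Finsupp.equivFunOnFinite.symm fun _ => ∑ i, b i) : Sym2 (Fin n) →₀ ℕ)) := by
    intro u hu
    simp only [Finset.coe_Iic, Set.mem_Iic, Finsupp.le_def]
    intro s
    induction s using Sym2.ind with
    | _ i j =>
      have h1 : u s(i, j) * wtN n s(i, j) i ≤ VN n u i :=
        Finset.single_le_sum (f := fun s => u s * wtN n s i)
          (fun s _ => Nat.zero_le _) (Finset.mem_univ s(i, j))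
      have h2 : 1 ≤ wtN n s(i, j) i := by
        simp only [wtN, Sym2.lift_mk, if_pos rfl]
        exact Nat.le_add_right 1 _
      have h3 : u s(i, j) ≤ b i := by
        have hb : VN n u i = b i := congrFun hu i
        calc u s(i, j) ≤ u s(i, j) * wtN n s(i, j) i := Nat.le_mul_of_pos_right _ h2
          _ ≤ VN n u i := h1
          _ = b i := hb
      calc u s(i, j) ≤ b i := h3
        _ ≤ ∑ i, b i := Finset.single_le_sum (fun _ _ => Nat.zero_le _) (Finset.mem_univ _)
        _ = (Finsupp.equivFunOnFinite.symm fun _ => ∑ i, b i) s(i, j) := by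
            simp
  exact Set.Finite.subset (Finset.finite_toSet _) hsub

variable (k : Type*) [Field k]

/-- the polynomial ring `k[x_{ij}]`. -/
abbrev R := MvPolynomial (Sym2 (Fin n)) k

/-- The principal minor ideal `J_n`. -/
noncomputable def Jideal : Ideal (R n k) :=
  Ideal.span {f | ∃ i j : Fin n, i < j ∧ f = X s(i, i) * X s(j, j) - X s(i, j) ^ 2}

/-- The map `x_{ij} ↦ t_i t_j`. -/
noncomputable def veroHom : R n k →ₐ[k] MvPolynomial (Fin n) k :=
  aeval fun s => Sym2.lift ⟨fun a b => X a * X b, fun a b => mul_comm _ _⟩ s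

/-- The second Veronese ideal `I_n`. -/
noncomputable def Iideal : Ideal (R n k) := RingHom.ker (veroHom n k)

/-- A ℤ₂-twisting: an automorphism sending each variable to ± itself. -/
def IsTwisting (φ : R n k ≃ₐ[k] R n k) : Prop :=
  ∀ s : Sym2 (Fin n), φ (X s) = X s ∨ φ (X s) = - X s

/-- `f` is V_n-homogeneous of degree `b`. -/
def VHomog (f : R n k) (b : Fin n → ℕ) : Prop := ∀ u ∈ f.support, VN n u = b

/-- The fiber over `b` as a finite set. -/
noncomputable def fiberFinset (b : Fin n → ℕ) : Finset (Sym2 (Fin n) →₀ ℕ) :=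
  (fiber_finite n b).toFinset

/-- generating function of the canonical (0/1 off-diagonal) representatives of
the fiber over `b`. -/
noncomputable def pplusAt (b : Fin n → ℕ) : R n k :=
  ∑ u ∈ (fiberFinset n b).filter (fun u => ∀ s : Sym2 (Fin n), ¬s.IsDiag → u s ≤ 1),
    monomial u (1 : k)

/-- `p⁺_{n,j}` (for `n` odd): fiber over `(n-2,…,n-2) + e_j`. -/
noncomputable def pplusOdd (j : Fin n) : R n k :=
  pplusAt n k fun i => (n - 2) + if i = j then 1 else 0

/-- `p⁺_n` (for `n` even): fiber over `(n-2,…,n-2)`. -/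
noncomputable def pplusEven : R n k :=
  pplusAt n k fun _ => n - 2

/-- `p_n = ∏_{i<j∈[n-1]} (x_{ij} x_{nn} + x_{in} x_{jn})`. -/
noncomputable def pn (hn : 0 < n) : R n k :=
  ∏ p ∈ Finset.univ.filter (fun p : Fin (n - 1) × Fin (n - 1) => p.1 < p.2),
    (X s(ι n p.1, ι n p.2) * X s(lastIdx n hn, lastIdx n hn)
      + X s(ι n p.1, lastIdx n hn) * X s(ι n p.2, lastIdx n hn))


section helpers

open Finset

variable {n : ℕ}

/-- `VN` as an additive homomorphism. -/
def VNh (n : ℕ) : (Sym2 (Fin n) →₀ ℕ) →+ (Fin n → ℕ) where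
  toFun := VN n
  map_zero' := by funext i; simp [VN]
  map_add' u v := by funext i; simp [VN, add_mul, Finset.sum_add_distrib]

lemma VNh_apply (u : Sym2 (Fin n) →₀ ℕ) : VNh n u = VN n u := rfl

lemma VNh_single (s : Sym2 (Fin n)) (m : ℕ) : VNh n (Finsupp.single s m) = m • wtN n s := by
  funext i
  simp [VNh, VN, Finsupp.single_apply]

lemma wtN_mk (a b i : Fin n) :
    wtN n s(a, b) i = (if i = a then 1 else 0) + (if i = b then 1 else 0) := rfl

/-- the diagonal exponent replacing a square of a variable. -/
noncomputable def dd : Sym2 (Fin n) → (Sym2 (Fin n) →₀ ℕ) :=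
  Sym2.lift ⟨fun a b => Finsupp.single s(a, a) 1 + Finsupp.single s(b, b) 1,
    fun a b => add_comm _ _⟩

lemma dd_mk (a b : Fin n) :
    dd s(a, b) = Finsupp.single s(a, a) 1 + Finsupp.single s(b, b) 1 := rfl

lemma VNh_dd (s : Sym2 (Fin n)) : VNh n (dd s) = 2 • wtN n s := by
  induction s using Sym2.ind with
  | _ a b =>
    rw [dd_mk, map_add, VNh_single, VNh_single]
    funext i
    simp only [Pi.add_apply, Pi.smul_apply, wtN_mk, smul_eq_mul]
    ring

lemma dd_offdiag (s t : Sym2 (Fin n)) (ht : ¬ t.IsDiag) : dd s t = 0 := by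
  induction s using Sym2.ind with
  | _ a b =>
    rw [dd_mk, Finsupp.add_apply, Finsupp.single_apply, Finsupp.single_apply,
      if_neg (by rintro rfl; exact ht (by simp)), if_neg (by rintro rfl; exact ht (by simp)),
      add_zero]

/-- normal form of an exponent. -/
noncomputable def nf (u : Sym2 (Fin n) →₀ ℕ) : Sym2 (Fin n) →₀ ℕ :=
  ∑ s, ((u s % 2) • Finsupp.single s 1 + (u s / 2) • dd s)

lemma sum_single_self (u : Sym2 (Fin n) →₀ ℕ) : u = ∑ s, u s • Finsupp.single s 1 := by
  ext t
  simp [Finsupp.finset_sum_apply, Finsupp.single_apply]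

lemma VN_nf (u : Sym2 (Fin n) →₀ ℕ) : VN n (nf u) = VN n u := by
  rw [← VNh_apply, ← VNh_apply]
  conv_rhs => rw [sum_single_self u]
  rw [nf, map_sum, map_sum]
  refine Finset.sum_congr rfl fun s _ => ?_
  rw [map_add, map_nsmul, map_nsmul, map_nsmul, VNh_single, VNh_dd]
  rw [smul_smul, smul_smul, smul_smul, ← add_smul]
  congr 1
  omega

lemma nf_offdiag (u : Sym2 (Fin n) →₀ ℕ) (t : Sym2 (Fin n)) (ht : ¬ t.IsDiag) :
    nf u t = u t % 2 := by
  simp [nf, Finsupp.finset_sum_apply, dd_offdiag _ t ht, Finsupp.single_apply]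

lemma VN_eq (u : Sym2 (Fin n) →₀ ℕ) (i : Fin n) :
    VN n u i = 2 * u s(i, i) + ∑ l ∈ univ.erase i, u s(i, l) := by
  have key : VN n u i = u s(i, i) + ∑ l, u s(i, l) := by
    induction u using Finsupp.induction_linear with
    | zero => simp [VN]
    | add f g hf hg =>
      rw [← VNh_apply, map_add, Pi.add_apply, VNh_apply, VNh_apply, hf, hg]
      simp only [Finsupp.add_apply, Finset.sum_add_distrib]
      ring
    | single s m =>
      induction s using Sym2.ind with
      | _ a b =>
        rw [← VNh_apply, VNh_single, Pi.smul_apply, wtN_mk]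
        simp only [Finsupp.single_apply, smul_eq_mul, Sym2.eq_iff]
        by_cases ha : i = a
        · subst ha
          by_cases hb : i = b
          · subst hb
            simp
            ring
          · have hb' : ¬ b = i := fun h => hb h.symm
            simp [hb, hb']
        · have ha' : ¬ a = i := fun h => ha h.symm
          by_cases hb : i = b
          · subst hb
            simp [ha, ha']
          · have hb' : ¬ b = i := fun h => hb h.symm
            simp [ha, hb, ha', hb']
  rw [key, ← Finset.add_sum_erase univ _ (Finset.mem_univ i)]
  ring

lemma eq_of_canon (u v : Sym2 (Fin n) →₀ ℕ) (h : VN n u = VN n v)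
    (hoff : ∀ s : Sym2 (Fin n), ¬ s.IsDiag → u s = v s) : u = v := by
  ext s
  by_cases hs : s.IsDiag
  · induction s using Sym2.ind with
    | _ a b =>
      have hab : a = b := by simpa using hs
      subst hab
      have h1 := congrFun h a
      rw [VN_eq, VN_eq] at h1
      have h2 : ∑ l ∈ univ.erase a, u s(a, l) = ∑ l ∈ univ.erase a, v s(a, l) := by
        refine Finset.sum_congr rfl fun l hl => hoff _ ?_
        simpa using (Finset.ne_of_mem_erase hl).symm
      omega
  · exact hoff s hs

lemma sum_modEq {α : Type*} (s : Finset α) (f g : α → ℕ)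
    (h : ∀ a ∈ s, f a % 2 = g a % 2) : (∑ a ∈ s, f a) % 2 = (∑ a ∈ s, g a) % 2 := by
  rw [Finset.sum_nat_mod, Finset.sum_nat_mod s 2 g, Finset.sum_congr rfl h]

/-- Parities away from the last index, together with the degree, determine all parities. -/
lemma parity_all {m : ℕ} (u v : Sym2 (Fin (m + 1)) →₀ ℕ)
    (h : ∀ j : Fin m, VN (m + 1) u j.castSucc % 2 = VN (m + 1) v j.castSucc % 2)
    (hoff : ∀ a b : Fin m, a < b →
      u s(a.castSucc, b.castSucc) % 2 = v s(a.castSucc, b.castSucc) % 2)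
    (s : Sym2 (Fin (m + 1))) (hs : ¬ s.IsDiag) : u s % 2 = v s % 2 := by
  have hoff' : ∀ a b : Fin m, a ≠ b →
      u s(a.castSucc, b.castSucc) % 2 = v s(a.castSucc, b.castSucc) % 2 := by
    intro a b hab
    rcases lt_or_gt_of_ne hab with h1 | h1
    · exact hoff a b h1
    · rw [Sym2.eq_swap]; exact hoff b a h1
  have hlast : ∀ j : Fin m, u s(j.castSucc, Fin.last m) % 2 = v s(j.castSucc, Fin.last m) % 2 := by
    intro j
    have h1 := h j
    rw [VN_eq, VN_eq] at h1
    have hmem : Fin.last m ∈ univ.erase j.castSucc := by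
      simp [Fin.ext_iff]; exact j.2.ne'
    rw [← Finset.add_sum_erase _ _ hmem, ← Finset.add_sum_erase _ _ hmem] at h1
    have h2 := sum_modEq ((univ.erase j.castSucc).erase (Fin.last m))
      (fun l => u s(j.castSucc, l)) (fun l => v s(j.castSucc, l)) (by
        intro l hl
        rw [Finset.mem_erase, Finset.mem_erase] at hl
        obtain ⟨l', rfl⟩ := Fin.exists_castSucc_eq.2 hl.1
        exact hoff' j l' (fun hh => hl.2.1 (by rw [hh])))
    omega
  induction s using Sym2.ind with
  | _ a b =>
    have hab : a ≠ b := by simpa using hs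
    induction a using Fin.lastCases with
    | last =>
      induction b using Fin.lastCases with
      | last => exact absurd rfl hab
      | cast b => rw [Sym2.eq_swap]; exact hlast b
    | cast a =>
      induction b using Fin.lastCases with
      | last => exact hlast a
      | cast b => exact hoff' a b (fun hh => hab (by rw [hh]))

section quot

variable (k : Type*) [Field k]

/-- class of a monomial modulo `J_n`. -/
noncomputable def q (u : Sym2 (Fin n) →₀ ℕ) : R n k ⧸ Jideal n k :=
  Ideal.Quotient.mk (Jideal n k) (monomial u 1)

lemma q_zero : q k (0 : Sym2 (Fin n) →₀ ℕ) = 1 := by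
  rw [q, ← map_one (Ideal.Quotient.mk (Jideal n k))]; rfl

lemma q_add (u v : Sym2 (Fin n) →₀ ℕ) : q k (u + v) = q k u * q k v := by
  rw [q, q, q, ← map_mul, monomial_mul, one_mul]

lemma q_nsmul (m : ℕ) (u : Sym2 (Fin n) →₀ ℕ) : q k (m • u) = q k u ^ m := by
  induction m with
  | zero => simp [q_zero]
  | succ m ih => rw [succ_nsmul, q_add, ih, pow_succ]

lemma q_sum {α : Type*} (s : Finset α) (f : α → (Sym2 (Fin n) →₀ ℕ)) :
    q k (∑ a ∈ s, f a) = ∏ a ∈ s, q k (f a) := by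
  classical
  induction s using Finset.induction_on with
  | empty => simp [q_zero]
  | insert a s ha ih => rw [Finset.sum_insert ha, Finset.prod_insert ha, q_add, ih]

lemma q_dd (s : Sym2 (Fin n)) : q k (dd s) = q k (Finsupp.single s 1) ^ 2 := by
  induction s using Sym2.ind with
  | _ a b =>
    have hlt : ∀ a b : Fin n, a < b →
        q k (dd s(a, b)) = q k (Finsupp.single s(a, b) 1) ^ 2 := by
      intro a b hab
      rw [dd_mk, q_add, q, q, q, ← map_mul, ← map_pow]
      rw [Ideal.Quotient.eq]
      exact Ideal.subset_span ⟨a, b, hab, rfl⟩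
    rcases lt_trichotomy a b with h | h | h
    · exact hlt a b h
    · subst h; rw [dd_mk, q_add, sq]
    · rw [Sym2.eq_swap]; exact hlt b a h

lemma q_nf (u : Sym2 (Fin n) →₀ ℕ) : q k (nf u) = q k u := by
  conv_rhs => rw [sum_single_self u]
  rw [nf, q_sum, q_sum]
  refine Finset.prod_congr rfl fun s _ => ?_
  rw [q_add, q_nsmul, q_nsmul, q_nsmul, q_dd, ← pow_mul, ← pow_add]
  congr 1
  omega

lemma q_eq (u v : Sym2 (Fin n) →₀ ℕ) (h : VN n u = VN n v)
    (hoff : ∀ s : Sym2 (Fin n), ¬ s.IsDiag → u s % 2 = v s % 2) : q k u = q k v := by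
  rw [← q_nf k u, ← q_nf k v]
  congr 1
  refine eq_of_canon _ _ (by rw [VN_nf, VN_nf, h]) fun s hs => ?_
  rw [nf_offdiag _ _ hs, nf_offdiag _ _ hs, hoff s hs]

end quot

/-- the edges of the complete graph. -/
def EE (m : ℕ) : Finset (Fin m × Fin m) := Finset.univ.filter (fun p => p.1 < p.2)

/-- exponent of the term of `x_{in} p_n` indexed by a graph `G`. -/
noncomputable def wG (m : ℕ) (i : Fin (m + 1)) (G : Finset (Fin m × Fin m)) :
    Sym2 (Fin (m + 1)) →₀ ℕ :=
  Finsupp.single s(i, Fin.last m) 1 +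
    (∑ p ∈ G, (Finsupp.single s(p.1.castSucc, p.2.castSucc) 1 +
        Finsupp.single s(Fin.last m, Fin.last m) 1) +
      ∑ p ∈ EE m \ G, (Finsupp.single s(p.1.castSucc, Fin.last m) 1 +
        Finsupp.single s(p.2.castSucc, Fin.last m) 1))

lemma EE_deg (m : ℕ) (j : Fin m) :
    ∑ p ∈ EE m, ((if j = p.1 then 1 else 0) + (if j = p.2 then 1 else 0)) = m - 1 := by
  rw [EE, Finset.sum_filter, Fintype.sum_prod_type]
  have : ∀ a b : Fin m, (if a < b then ((if j = a then 1 else 0) + (if j = b then 1 else 0)) else 0)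
      = (if j = a then (if j < b then 1 else 0) else 0) +
        (if j = b then (if a < j then 1 else 0) else 0) := by
    intro a b
    by_cases h1 : j = a <;> by_cases h2 : j = b <;> by_cases h3 : a < b <;> simp_all
  simp only [this, Finset.sum_add_distrib]
  rw [Finset.sum_comm (f := fun a b => if j = b then (if a < j then 1 else 0) else 0)]
  have h1 : ∑ a : Fin m, ∑ b : Fin m, (if j = a then (if j < b then 1 else 0) else 0)
      = m - 1 - j.1 := by
    rw [Finset.sum_comm]
    simp only [Finset.sum_ite_eq, Finset.mem_univ, if_true]
    rw [← Fin.card_Ioi, ← Finset.card_filter]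
    congr 1
    ext x; simp
  have h2 : ∑ b : Fin m, ∑ a : Fin m, (if j = b then (if a < j then 1 else 0) else 0)
      = j.1 := by
    rw [Finset.sum_comm]
    simp only [Finset.sum_ite_eq, Finset.mem_univ, if_true]
    conv_rhs => rw [← Fin.card_Iio j]
    rw [← Finset.card_filter]
    congr 1
    ext x; simp
  rw [h1, h2]
  omega

lemma EE_card (m : ℕ) : 2 * (EE m).card = m * (m - 1) := by
  have h : ∑ j : Fin m, ∑ p ∈ EE m, ((if j = p.1 then 1 else 0) + (if j = p.2 then 1 else 0))
      = m * (m - 1) := by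
    simp only [EE_deg]; simp
  rw [Finset.sum_comm] at h
  rw [← h]
  simp [Finset.sum_add_distrib, mul_comm]

lemma VN_wG (m : ℕ) (i : Fin (m + 1)) (G : Finset (Fin m × Fin m)) (hG : G ⊆ EE m) :
    VN (m + 1) (wG m i G) = wtN (m + 1) s(i, Fin.last m) +
      ∑ p ∈ EE m, (wtN (m + 1) s(p.1.castSucc, p.2.castSucc) +
        wtN (m + 1) s(Fin.last m, Fin.last m)) := by
  rw [← VNh_apply, wG, map_add, map_add, map_sum, map_sum, VNh_single, one_smul]
  congr 1
  rw [← Finset.sum_sdiff hG, add_comm (∑ p ∈ G, _)]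
  congr 1
  · refine Finset.sum_congr rfl fun p _ => ?_
    rw [map_add, VNh_single, VNh_single, one_smul, one_smul]
    funext l
    simp only [Pi.add_apply, wtN_mk]
    ring
  · refine Finset.sum_congr rfl fun p _ => ?_
    rw [map_add, VNh_single, VNh_single, one_smul, one_smul]

lemma VN_wG_cast (m : ℕ) (i : Fin (m + 1)) (G : Finset (Fin m × Fin m)) (hG : G ⊆ EE m)
    (j : Fin m) :
    VN (m + 1) (wG m i G) j.castSucc = (m - 1) + if j.castSucc = i then 1 else 0 := by
  rw [VN_wG m i G hG, Pi.add_apply, Finset.sum_apply]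
  simp only [Pi.add_apply, wtN_mk]
  have h : j.castSucc ≠ Fin.last m := Fin.castSucc_ne_last j
  simp only [h, if_false, add_zero, Fin.castSucc_inj]
  rw [EE_deg, add_comm]

lemma VN_wG_last (m : ℕ) (i : Fin (m + 1)) (G : Finset (Fin m × Fin m)) (hG : G ⊆ EE m) :
    VN (m + 1) (wG m i G) (Fin.last m) = m * (m - 1) + 1 + if Fin.last m = i then 1 else 0 := by
  rw [VN_wG m i G hG, Pi.add_apply, Finset.sum_apply]
  simp only [Pi.add_apply, wtN_mk]
  have h : ∀ j : Fin m, Fin.last m ≠ j.castSucc := fun j => (Fin.castSucc_ne_last j).symm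
  simp only [h, if_false, if_true, zero_add, Finset.sum_const, smul_eq_mul]
  rw [← EE_card]
  ring

lemma wG_apply (m : ℕ) (i : Fin (m + 1)) (G : Finset (Fin m × Fin m)) (hG : G ⊆ EE m)
    (a b : Fin m) (hab : a < b) :
    wG m i G s(a.castSucc, b.castSucc) = if (a, b) ∈ G then 1 else 0 := by
  have h : ∀ j : Fin m, Fin.last m ≠ j.castSucc := fun j => (Fin.castSucc_ne_last j).symm
  have h' : ∀ j : Fin m, j.castSucc ≠ Fin.last m := fun j => (Fin.castSucc_ne_last j)
  simp only [wG, Finsupp.add_apply, Finsupp.finset_sum_apply, Finsupp.single_apply, Sym2.eq_iff,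
    h, h', and_false, false_and, or_false, if_false, zero_add, add_zero, Fin.castSucc_inj,
    Finset.sum_const_zero]
  rw [← Finset.sum_ite_eq' G (a, b) (fun _ => 1)]
  refine Finset.sum_congr rfl fun p hp => ?_
  have hp' : p.1 < p.2 := (Finset.mem_filter.1 (hG hp)).2
  refine if_congr ?_ rfl rfl
  rw [Prod.ext_iff]
  constructor
  · rintro (h1 | ⟨h1, h2⟩)
    · exact h1
    · rw [h1, h2] at hp'; exact absurd hp' hab.asymm
  · exact Or.inl

/-- the graph of an exponent. -/
def gr (m : ℕ) (u : Sym2 (Fin (m + 1)) →₀ ℕ) : Finset (Fin m × Fin m) :=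
  (EE m).filter fun p => u s(p.1.castSucc, p.2.castSucc) = 1

lemma mem_gr (m : ℕ) (u : Sym2 (Fin (m + 1)) →₀ ℕ) (a b : Fin m) (hab : a < b) :
    (a, b) ∈ gr m u ↔ u s(a.castSucc, b.castSucc) = 1 := by
  simp [gr, EE, hab]

/-- index set of `p⁺`. -/
noncomputable def SS (m : ℕ) (i : Fin (m + 1)) : Finset (Sym2 (Fin (m + 1)) →₀ ℕ) :=
  (fiberFinset (m + 1) fun l => (m + 1 - 2) + if l = i then 1 else 0).filter
    (fun u => ∀ s : Sym2 (Fin (m + 1)), ¬s.IsDiag → u s ≤ 1)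

lemma mem_SS (m : ℕ) (i : Fin (m + 1)) (u : Sym2 (Fin (m + 1)) →₀ ℕ) :
    u ∈ SS m i ↔ (∀ l, VN (m + 1) u l = (m - 1) + if l = i then 1 else 0) ∧
      ∀ s : Sym2 (Fin (m + 1)), ¬s.IsDiag → u s ≤ 1 := by
  rw [SS, Finset.mem_filter, fiberFinset, Set.Finite.mem_toFinset, fiber, Set.mem_setOf_eq,
    funext_iff]
  rfl

lemma castSucc_not_diag {m : ℕ} {a b : Fin m} (hab : a < b) :
    ¬ (s(a.castSucc, b.castSucc)).IsDiag := by
  simpa using hab.ne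

lemma gr_apply (m : ℕ) (i : Fin (m + 1)) (u : Sym2 (Fin (m + 1)) →₀ ℕ) (hu : u ∈ SS m i)
    (a b : Fin m) (hab : a < b) :
    u s(a.castSucc, b.castSucc) = if (a, b) ∈ gr m u then 1 else 0 := by
  have h1 := ((mem_SS m i u).1 hu).2 _ (castSucc_not_diag hab)
  have h2 := mem_gr m u a b hab
  split_ifs with h
  · exact h2.1 h
  · have h3 : u s(a.castSucc, b.castSucc) ≠ 1 := fun h4 => h (h2.2 h4)
    omega

lemma deg_arith (m : ℕ) (hm : 2 ≤ m) (he : Even m) :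
    m * (m - 1) + 1 = (m - 1) + 2 * (m * (m - 2) / 2 + 1) := by
  obtain ⟨r, rfl⟩ := he
  obtain ⟨t, rfl⟩ : ∃ t, r = t + 1 := ⟨r - 1, by omega⟩
  have h1 : t + 1 + (t + 1) - 1 = 2 * t + 1 := by omega
  have h2 : t + 1 + (t + 1) - 2 = 2 * t := by omega
  rw [h1, h2]
  have h3 : (t + 1 + (t + 1)) * (2 * t) / 2 = (t + 1 + (t + 1)) * t := by
    rw [show (t + 1 + (t + 1)) * (2 * t) = (t + 1 + (t + 1)) * t * 2 by ring]
    simp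
  rw [h3]
  ring

lemma VN_shift (m : ℕ) (c : ℕ) (u : Sym2 (Fin (m + 1)) →₀ ℕ) (l : Fin (m + 1)) :
    VN (m + 1) (c • Finsupp.single s(Fin.last m, Fin.last m) 1 + u) l =
      (if l = Fin.last m then 2 * c else 0) + VN (m + 1) u l := by
  rw [← VNh_apply, map_add, map_nsmul, VNh_single, one_smul, Pi.add_apply, Pi.smul_apply, wtN_mk,
    VNh_apply]
  split_ifs <;> simp
  ring

lemma shift_offdiag (m : ℕ) (c : ℕ) (u : Sym2 (Fin (m + 1)) →₀ ℕ) (s : Sym2 (Fin (m + 1)))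
    (hs : ¬ s.IsDiag) :
    (c • Finsupp.single s(Fin.last m, Fin.last m) 1 + u : Sym2 (Fin (m + 1)) →₀ ℕ) s = u s := by
  have : s(Fin.last m, Fin.last m) ≠ s := by rintro rfl; exact hs (by simp)
  simp [Finsupp.single_apply, this]

lemma VN_wG_eq (m : ℕ) (hm : 2 ≤ m) (he : Even m) (i : Fin (m + 1)) (G : Finset (Fin m × Fin m))
    (hG : G ⊆ EE m) (u : Sym2 (Fin (m + 1)) →₀ ℕ) (hu : u ∈ SS m i) :
    VN (m + 1) ((m * (m - 2) / 2 + 1) • Finsupp.single s(Fin.last m, Fin.last m) 1 + u)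
      = VN (m + 1) (wG m i G) := by
  have h1 := ((mem_SS m i u).1 hu).1
  funext l
  rw [VN_shift, h1]
  induction l using Fin.lastCases with
  | last =>
    rw [VN_wG_last m i G hG, deg_arith m hm he, if_pos rfl]
    ring
  | cast j =>
    rw [VN_wG_cast m i G hG, if_neg (Fin.castSucc_ne_last j), zero_add]

lemma term_eq (m : ℕ) (hm : 2 ≤ m) (he : Even m) (k : Type*) [Field k] (i : Fin (m + 1))
    (u : Sym2 (Fin (m + 1)) →₀ ℕ) (hu : u ∈ SS m i) :
    q k ((m * (m - 2) / 2 + 1) • Finsupp.single s(Fin.last m, Fin.last m) 1 + u)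
      = q k (wG m i (gr m u)) := by
  have hG : gr m u ⊆ EE m := Finset.filter_subset _ _
  have hV := VN_wG_eq m hm he i (gr m u) hG u hu
  refine q_eq k _ _ hV (parity_all _ _ (fun j => by rw [hV]) ?_)
  intro a b hab
  rw [shift_offdiag _ _ _ _ (castSucc_not_diag hab), wG_apply m i _ hG a b hab,
    gr_apply m i u hu a b hab]

lemma gr_inj (m : ℕ) (i : Fin (m + 1)) (u v : Sym2 (Fin (m + 1)) →₀ ℕ) (hu : u ∈ SS m i)
    (hv : v ∈ SS m i) (h : gr m u = gr m v) : u = v := by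
  have hu' := (mem_SS m i u).1 hu
  have hv' := (mem_SS m i v).1 hv
  have hV : VN (m + 1) u = VN (m + 1) v := by
    funext l; rw [hu'.1, hv'.1]
  refine eq_of_canon u v hV fun s hs => ?_
  have := parity_all u v (fun j => by rw [hV]) (fun a b hab => by
    rw [gr_apply m i u hu a b hab, gr_apply m i v hv a b hab, h]) s hs
  have h1 := hu'.2 s hs
  have h2 := hv'.2 s hs
  omega

lemma gr_surj (m : ℕ) (hm : 2 ≤ m) (he : Even m) (i : Fin (m + 1)) (G : Finset (Fin m × Fin m))
    (hG : G ⊆ EE m) : ∃ u ∈ SS m i, gr m u = G := by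
  set c := m * (m - 2) / 2 + 1 with hc
  set v := nf (wG m i G) with hv
  have hVv : VN (m + 1) v = VN (m + 1) (wG m i G) := VN_nf _
  have hoff : ∀ s : Sym2 (Fin (m + 1)), ¬ s.IsDiag → v s = wG m i G s % 2 :=
    fun s hs => nf_offdiag _ s hs
  have hle : c ≤ v s(Fin.last m, Fin.last m) := by
    have h1 := congrFun hVv (Fin.last m)
    rw [VN_wG_last m i G hG, deg_arith m hm he, VN_eq] at h1
    have h2 : ∑ l ∈ univ.erase (Fin.last m), v s(Fin.last m, l)
        ≤ ∑ l ∈ univ.erase (Fin.last m), 1 := by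
      refine Finset.sum_le_sum fun l hl => ?_
      rw [hoff _ (by simpa using (Finset.ne_of_mem_erase hl).symm)]
      omega
    rw [Finset.sum_const, Finset.card_erase_of_mem (Finset.mem_univ _)] at h2
    simp only [Finset.card_univ, Fintype.card_fin, smul_eq_mul, mul_one] at h2
    rw [← hc] at h1
    split_ifs at h1 <;> omega
  have hsub : c • Finsupp.single s(Fin.last m, Fin.last m) 1 +
      (v - c • Finsupp.single s(Fin.last m, Fin.last m) 1) = v := by
    refine add_tsub_cancel_of_le ?_
    intro s
    rw [Finsupp.smul_apply, Finsupp.single_apply]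
    split_ifs with h
    · subst h; simpa using hle
    · simp
  set u := v - c • Finsupp.single s(Fin.last m, Fin.last m) 1 with hu
  have huoff : ∀ s : Sym2 (Fin (m + 1)), ¬ s.IsDiag → u s = wG m i G s % 2 := by
    intro s hs
    rw [← hoff s hs, ← hsub, shift_offdiag _ _ _ _ hs]
  have huS : u ∈ SS m i := by
    rw [mem_SS]
    constructor
    · intro l
      have h1 := congrFun hVv l
      rw [← hsub, VN_shift] at h1
      induction l using Fin.lastCases with
      | last =>
        rw [VN_wG_last m i G hG, deg_arith m hm he, if_pos rfl, ← hc] at h1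
        omega
      | cast j =>
        rw [VN_wG_cast m i G hG, if_neg (Fin.castSucc_ne_last j), zero_add] at h1
        exact h1
    · intro s hs
      rw [huoff s hs]; omega
  refine ⟨u, huS, ?_⟩
  ext ⟨a, b⟩
  by_cases hab : a < b
  · rw [mem_gr m u a b hab, huoff _ (castSucc_not_diag hab), wG_apply m i G hG a b hab]
    split_ifs with h <;> simp [h]
  · constructor
    · intro h
      exact absurd (Finset.mem_filter.1 (Finset.mem_filter.1 h).1).2 hab
    · intro h
      exact absurd (Finset.mem_filter.1 (hG h)).2 hab

lemma main_quot (m : ℕ) (hm : 2 ≤ m) (he : Even m) (k : Type*) [Field k] (i : Fin (m + 1)) :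
    q k (Finsupp.single s(Fin.last m, Fin.last m) 1) ^ (m * (m - 2) / 2 + 1) *
        ∑ u ∈ SS m i, q k u =
      q k (Finsupp.single s(i, Fin.last m) 1) * ∏ p ∈ EE m,
        (q k (Finsupp.single s(p.1.castSucc, p.2.castSucc) 1) *
            q k (Finsupp.single s(Fin.last m, Fin.last m) 1) +
          q k (Finsupp.single s(p.1.castSucc, Fin.last m) 1) *
            q k (Finsupp.single s(p.2.castSucc, Fin.last m) 1)) := by
  rw [Finset.prod_add, Finset.mul_sum, Finset.mul_sum]
  refine Finset.sum_bij (fun u _ => gr m u) ?_ ?_ ?_ ?_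
  · intro u _
    exact Finset.mem_powerset.2 (Finset.filter_subset _ _)
  · intro u hu v hv h
    exact gr_inj m i u v hu hv h
  · intro G hG
    obtain ⟨u, hu, h⟩ := gr_surj m hm he i G (Finset.mem_powerset.1 hG)
    exact ⟨u, hu, h⟩
  · intro u hu
    rw [← q_nsmul, ← q_add, term_eq m hm he k i u hu, wG, q_add, q_add, q_sum, q_sum]
    simp only [q_add]

end helpers

/-- For odd `n ≥ 3`, with `σ = (n-1)(n-3)/2`:
`x_{nn}^{σ+1} · p⁺_{n,i} = x_{in} · p_n` in `k[x]/J_n` for every `i`. -/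
theorem xnn_pow_mul_pplus_odd (n : ℕ) (hn : 3 ≤ n) (hodd : Odd n)
    (k : Type*) [Field k] (i : Fin n) :
    X s(lastIdx n (by omega), lastIdx n (by omega)) ^ ((n - 1) * (n - 3) / 2 + 1) *
        pplusOdd n k i -
      X s(i, lastIdx n (by omega)) * pn n k (by omega) ∈ Jideal n k := by
  obtain ⟨m, rfl⟩ : ∃ m, n = m + 1 := ⟨n - 1, by omega⟩
  have he : Even m := by
    rcases hodd with ⟨r, hr⟩
    exact ⟨r, by omega⟩
  rw [← Ideal.Quotient.eq, map_mul, map_mul, map_pow, pplusOdd, pplusAt, pn, map_sum, map_prod]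
  simp only [map_add, map_mul]
  exact main_quot m (by omega) he k i

end Veronese
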